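/- Let G=(V,E) be a finite, connected, non-bipartite, vertex-transitive graph of degree d, with normalized adjacency eigenvalues μ_n ≤ … ≤ μ_1 = 1 and edge-expansion h. Then 1 + μ_n ≥ min{ 2/d, ((√3 − 1)^2 / 8) · h^2 }. -/

import Mathlib

open Finset Polynomial

noncomputable section
open scoped Classical

/-- The normalized adjacency matrix `D⁻¹A` of a finite graph. -/
def normAdj {V : Type*} [Fintype V] (G : SimpleGraph V) : Matrix V V ℝ :=
  Matrix.of fun u v => if G.Adj u v then ((G.degree u : ℝ))⁻¹ else 0

/-- The volume of a vertex subset: the sum of the degrees of its vertices. -/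
def vol {V : Type*} [Fintype V] (G : SimpleGraph V) (S : Finset V) : ℝ :=
  ∑ u ∈ S, (G.degree u : ℝ)

/-- The number of boundary edges of a vertex subset, i.e. edges with exactly one
endpoint in `S`. -/
def bdry {V : Type*} [Fintype V] (G : SimpleGraph V) (S : Finset V) : ℝ :=
  ∑ u ∈ S, ∑ v ∈ Sᶜ, if G.Adj u v then (1 : ℝ) else 0

/-- The edge-expansion (Cheeger constant)
`h = min_{∅ ≠ S ⊊ V} |∂S| / min(vol S, vol Sᶜ)`. -/
def cheeger {V : Type*} [Fintype V] (G : SimpleGraph V) : ℝ :=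
  sInf { x : ℝ | ∃ S : Finset V, S.Nonempty ∧ S ≠ Finset.univ ∧
    x = bdry G S / min (vol G S) (vol G Sᶜ) }

/-- A graph is vertex-transitive if its automorphism group acts transitively on vertices. -/
def VertexTransitive {V : Type*} (G : SimpleGraph V) : Prop :=
  ∀ u v : V, ∃ φ : G ≃g G, φ u = v

/-- The `0`-`1` adjacency weight of a pair of vertices. -/
def adjWeight {V : Type*} (G : SimpleGraph V) (u v : V) : ℝ := if G.Adj u v then 1 else 0

section Weights

variable {V : Type*} (G : SimpleGraph V)

lemma adjWeight_nonneg (u v : V) : 0 ≤ adjWeight G u v := by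
  unfold adjWeight; split_ifs <;> norm_num

lemma adjWeight_comm (u v : V) : adjWeight G u v = adjWeight G v u := by
  simp [adjWeight, G.adj_comm]

variable [Fintype V] {G} {d : ℕ}

lemma sum_adjWeight_right (hreg : G.IsRegularOfDegree d) (u : V) :
    ∑ v, adjWeight G u v = d := by
  rw [← hreg u, ← G.card_neighborFinset_eq_degree, G.neighborFinset_eq_filter]
  simp [adjWeight]

lemma sum_adjWeight_mul_left (hreg : G.IsRegularOfDegree d) (f : V → ℝ) :
    ∑ u, ∑ v, adjWeight G u v * f u = d * ∑ u, f u := by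
  simp_rw [← Finset.sum_mul, sum_adjWeight_right hreg, Finset.mul_sum]

lemma sum_adjWeight_mul_right (hreg : G.IsRegularOfDegree d) (f : V → ℝ) :
    ∑ u, ∑ v, adjWeight G u v * f v = d * ∑ u, f u := by
  rw [Finset.sum_comm, ← sum_adjWeight_mul_left hreg]
  simp_rw [adjWeight_comm G]

lemma normAdj_apply (hreg : G.IsRegularOfDegree d) (u v : V) :
    normAdj G u v = (d : ℝ)⁻¹ * adjWeight G u v := by
  simp [normAdj, adjWeight, hreg u]

lemma isHermitian_normAdj (hreg : G.IsRegularOfDegree d) : (normAdj G).IsHermitian := by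
  ext u v
  simp [normAdj_apply hreg, adjWeight_comm G u v]

end Weights

section Cheeger

variable {V : Type*} [Fintype V] (G : SimpleGraph V) {d : ℕ}

lemma bdry_nonneg (S : Finset V) : 0 ≤ bdry G S :=
  Finset.sum_nonneg fun _ _ => Finset.sum_nonneg fun _ _ => by split_ifs <;> norm_num

lemma vol_nonneg (S : Finset V) : 0 ≤ vol G S :=
  Finset.sum_nonneg fun _ _ => Nat.cast_nonneg _

lemma cheeger_ratio_nonneg (S : Finset V) :
    0 ≤ bdry G S / min (vol G S) (vol G Sᶜ) :=
  div_nonneg (bdry_nonneg G S) (le_min (vol_nonneg G S) (vol_nonneg G Sᶜ))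

lemma cheeger_nonneg : 0 ≤ cheeger G := by
  apply Real.sInf_nonneg
  rintro x ⟨S, -, -, rfl⟩
  exact cheeger_ratio_nonneg G S

variable {G}

lemma vol_eq_of_regular (hreg : G.IsRegularOfDegree d) (S : Finset V) :
    vol G S = d * #S := by
  rw [vol, Finset.sum_congr rfl fun u _ => congrArg Nat.cast (hreg u)]
  simp [mul_comm]

/-- Expansion of sets containing at most half of the vertices. -/
lemma cheeger_mul_card_le_bdry [Nonempty V] (hreg : G.IsRegularOfDegree d) (hd : 0 < d)
    {S : Finset V} (hS : 2 * #S ≤ Fintype.card V) :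
    cheeger G * (d * #S) ≤ bdry G S := by
  rcases S.eq_empty_or_nonempty with rfl | hne
  · simp [bdry]
  have hpos : 0 < Fintype.card V := Fintype.card_pos
  have huniv : S ≠ Finset.univ := by
    rintro rfl
    rw [Finset.card_univ] at hS
    omega
  have hle : cheeger G ≤ bdry G S / min (vol G S) (vol G Sᶜ) := by
    refine csInf_le ⟨0, ?_⟩ ⟨S, hne, huniv, rfl⟩
    rintro x ⟨T, -, -, rfl⟩
    exact cheeger_ratio_nonneg G T
  have hmin : min (vol G S) (vol G Sᶜ) = d * #S := by
    rw [vol_eq_of_regular hreg, vol_eq_of_regular hreg]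
    refine min_eq_left (mul_le_mul_of_nonneg_left ?_ (Nat.cast_nonneg _))
    have := S.card_add_card_compl
    exact_mod_cast (by omega : #S ≤ #Sᶜ)
  rw [hmin, le_div_iff₀] at hle
  · exact hle
  · have := hne.card_pos
    positivity

lemma sum_adjWeight_abs_indicator (S : Finset V) :
    ∑ u, ∑ v, adjWeight G u v * |(if u ∈ S then (1 : ℝ) else 0) - if v ∈ S then 1 else 0| =
      2 * bdry G S := by
  have hone : ∑ u, ∑ v, (if u ∈ S then if v ∈ Sᶜ then adjWeight G u v else 0 else 0) =
      bdry G S := by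
    unfold bdry adjWeight
    simp only [Finset.sum_ite_irrel, Finset.sum_const_zero, Finset.sum_ite_mem,
      Finset.univ_inter]
  rw [two_mul, ← hone]
  nth_rewrite 3 [Finset.sum_comm]
  rw [← Finset.sum_add_distrib]
  refine Finset.sum_congr rfl fun u _ => ?_
  rw [← Finset.sum_add_distrib]
  refine Finset.sum_congr rfl fun v _ => ?_
  by_cases hu : u ∈ S <;> by_cases hv : v ∈ S <;> simp [hu, hv, adjWeight_comm G u v]

/-- The `L¹` Cheeger inequality for nonnegative functions supported on at most half of the
vertices. -/
lemma cheeger_mul_sum_le_of_nonneg [Nonempty V] (hreg : G.IsRegularOfDegree d) (hd : 0 < d)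
    (f : V → ℝ) (hf : ∀ v, 0 ≤ f v) (hsupp : 2 * #{v | 0 < f v} ≤ Fintype.card V) :
    2 * cheeger G * d * ∑ v, f v ≤ ∑ u, ∑ v, adjWeight G u v * |f u - f v| := by
  induction hk : #{v | 0 < f v} using Nat.strong_induction_on generalizing f with
  | _ k ih =>
    set S : Finset V := {v | 0 < f v} with hSdef
    have hmem : ∀ v, v ∈ S ↔ 0 < f v := fun v => by simp [hSdef]
    have hout : ∀ v, v ∉ S → f v = 0 := fun v hv =>
      le_antisymm (not_lt.1 fun h => hv ((hmem v).2 h)) (hf v)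
    rcases S.eq_empty_or_nonempty with hS | hS
    · have hzero : ∀ v, f v = 0 := fun v => hout v (by simp [hS])
      simp [hzero]
    obtain ⟨w, hw, hmin⟩ := S.exists_min_image f hS
    have hm : 0 < f w := (hmem w).1 hw
    let χ : V → ℝ := fun v => if v ∈ S then 1 else 0
    let g : V → ℝ := fun v => f v - f w * χ v
    have hg : ∀ v, 0 ≤ g v := fun v => by
      by_cases hv : v ∈ S
      · simpa [g, χ, hv] using hmin v hv
      · simp [g, χ, hv, hout v hv]
    have hsub : ({v | 0 < g v} : Finset V) ⊂ S := by
      refine (Finset.ssubset_iff_of_subset fun v hv => ?_).2 ⟨w, hw, by simp [g, χ, hw]⟩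
      by_contra hvS
      simp [g, χ, hvS, hout v hvS] at hv
    have hcard := Finset.card_lt_card hsub
    have hrec := ih _ (hk ▸ hcard) g hg (by omega) rfl
    have hind := cheeger_mul_card_le_bdry hreg hd hsupp
    have hsum : ∑ v, f v = ∑ v, g v + f w * #S := by
      simp [g, χ, Finset.sum_sub_distrib, mul_comm]
    have habs : ∀ u v, |f u - f v| = |g u - g v| + f w * |χ u - χ v| := fun u v => by
      by_cases hu : u ∈ S <;> by_cases hv : v ∈ S
      · simp [g, χ, hu, hv]
      · have := hmin u hu
        simp only [g, χ, hu, hv, hout v hv, if_true, if_false]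
        rw [abs_of_nonneg, abs_of_nonneg, abs_of_nonneg] <;> linarith
      · have := hmin v hv
        simp only [g, χ, hu, hv, hout u hu, if_true, if_false]
        rw [abs_of_nonpos, abs_of_nonpos, abs_of_nonpos] <;> linarith
      · simp [g, χ, hu, hv]
    have hsplit : ∑ u, ∑ v, adjWeight G u v * |f u - f v| =
        ∑ u, ∑ v, adjWeight G u v * |g u - g v| + f w * (2 * bdry G S) := by
      rw [← sum_adjWeight_abs_indicator, Finset.mul_sum, ← Finset.sum_add_distrib]
      refine Finset.sum_congr rfl fun u _ => ?_
      rw [Finset.mul_sum, ← Finset.sum_add_distrib]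
      refine Finset.sum_congr rfl fun v _ => ?_
      rw [habs]
      ring
    rw [hsplit, hsum]
    nlinarith [mul_le_mul_of_nonneg_left hind hm.le]

/-- The `L¹` Cheeger inequality for functions with median zero. -/
lemma cheeger_mul_sum_abs_le [Nonempty V] (hreg : G.IsRegularOfDegree d) (hd : 0 < d)
    (f : V → ℝ) (hpos : 2 * #{v | 0 < f v} ≤ Fintype.card V)
    (hneg : 2 * #{v | f v < 0} ≤ Fintype.card V) :
    2 * cheeger G * d * ∑ v, |f v| ≤ ∑ u, ∑ v, adjWeight G u v * |f u - f v| := by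
  have hp := cheeger_mul_sum_le_of_nonneg hreg hd (fun v => max (f v) 0)
    (fun v => le_max_right _ _) (by simpa using hpos)
  have hq := cheeger_mul_sum_le_of_nonneg hreg hd (fun v => max (-f v) 0)
    (fun v => le_max_right _ _) (by simpa using hneg)
  have hsum : ∑ v, |f v| = ∑ v, max (f v) 0 + ∑ v, max (-f v) 0 := by
    rw [← Finset.sum_add_distrib]
    refine Finset.sum_congr rfl fun v _ => ?_
    rcases le_total (f v) 0 with h | h
    · simp [h, abs_of_nonpos]
    · simp [h, abs_of_nonneg]
  have hsplit : ∑ u, ∑ v, adjWeight G u v * |f u - f v| =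
      ∑ u, ∑ v, adjWeight G u v * |max (f u) 0 - max (f v) 0| +
        ∑ u, ∑ v, adjWeight G u v * |max (-f u) 0 - max (-f v) 0| := by
    simp_rw [← Finset.sum_add_distrib, ← mul_add]
    refine Finset.sum_congr rfl fun u _ => Finset.sum_congr rfl fun v _ => ?_
    congr 1
    rcases le_total (f u) 0 with hu | hu <;> rcases le_total (f v) 0 with hv | hv
    · simp [hu, hv, neg_add_eq_sub, abs_sub_comm (f v)]
    · simp [hu, hv, abs_of_nonneg, abs_of_nonpos, sub_nonpos.2 (hu.trans hv)]
      ring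
    · simp [hu, hv, abs_of_nonneg, abs_of_nonpos, sub_nonneg.2 (hv.trans hu)]
      ring
    · simp [hu, hv]
  rw [hsum, hsplit]
  linarith

/-- Every real function on a finite nonempty type has a median. -/
lemma exists_median [Nonempty V] (f : V → ℝ) :
    ∃ m : ℝ, 2 * #{v | m < f v} ≤ Fintype.card V ∧ 2 * #{v | f v < m} ≤ Fintype.card V := by
  obtain ⟨w, -, hw⟩ := Finset.exists_max_image Finset.univ f Finset.univ_nonempty
  let T : Finset V := {x | 2 * #{v | f x < f v} ≤ Fintype.card V}
  have hT : T.Nonempty := by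
    refine ⟨w, ?_⟩
    have : ({v | f w < f v} : Finset V) = ∅ := by
      ext v; simpa using hw v (Finset.mem_univ v)
    simp [T, this]
  obtain ⟨x, hx, hmin⟩ := T.exists_min_image f hT
  refine ⟨f x, by simpa [T] using hx, ?_⟩
  by_contra! hlt
  have hne : ({v | f v < f x} : Finset V).Nonempty := by
    rw [← Finset.card_pos]; omega
  obtain ⟨y, hy, hmax⟩ := Finset.exists_max_image _ f hne
  have hyx : f y < f x := by simpa using hy
  refine absurd (hmin y ?_) (not_le.2 hyx)
  have hsub : ({v | f y < f v} : Finset V) ⊆ ({v | f v < f x} : Finset V)ᶜ := by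
    intro v hv
    simp only [Finset.mem_compl, Finset.mem_filter, Finset.mem_univ, true_and] at hv ⊢
    exact fun h => absurd (hmax v (by simpa using h)) (not_le.2 hv)
  have h₁ := Finset.card_le_card hsub
  have h₂ := Finset.card_add_card_compl ({v | f v < f x} : Finset V)
  simp only [T, Finset.mem_filter, Finset.mem_univ, true_and]
  omega

lemma abs_mul_abs_sub_le (a b : ℝ) :
    |(a * |a| - b * |b|)| ≤ |a - b| * (|a| + |b|) := by
  rcases le_total 0 a with ha | ha <;> rcases le_total 0 b with hb | hb
  · rw [abs_of_nonneg ha, abs_of_nonneg hb, ← abs_of_nonneg (add_nonneg ha hb), ← abs_mul]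
    exact le_of_eq (congrArg _ (by ring))
  · rw [abs_of_nonneg ha, abs_of_nonpos hb, abs_of_nonneg (sub_nonneg.2 (hb.trans ha)), abs_le]
    constructor <;> nlinarith [mul_nonneg ha (neg_nonneg.2 hb)]
  · rw [abs_of_nonpos ha, abs_of_nonneg hb, abs_of_nonpos (sub_nonpos.2 (ha.trans hb)), abs_le]
    constructor <;> nlinarith [mul_nonneg hb (neg_nonneg.2 ha)]
  · rw [abs_of_nonpos ha, abs_of_nonpos hb,
      ← abs_of_nonneg (add_nonneg (neg_nonneg.2 ha) (neg_nonneg.2 hb)), ← abs_mul]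
    exact le_of_eq (congrArg _ (by ring))

/-- The Cheeger inequality: the Poincaré inequality with constant `h²/2` for functions with
mean zero (every edge is counted twice on the right). -/
lemma cheeger_sq_mul_sum_sq_le [Nonempty V] (hreg : G.IsRegularOfDegree d) (hd : 0 < d)
    (f : V → ℝ) (hf : ∑ v, f v = 0) :
    cheeger G ^ 2 * d * ∑ v, f v ^ 2 ≤ ∑ u, ∑ v, adjWeight G u v * (f u - f v) ^ 2 := by
  obtain ⟨m, hm₁, hm₂⟩ := exists_median f
  let g : V → ℝ := fun v => f v - m
  have hgf : ∑ v, f v ^ 2 ≤ ∑ v, g v ^ 2 := by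
    have : ∑ v, g v ^ 2 = ∑ v, f v ^ 2 - 2 * m * ∑ v, f v + Fintype.card V * m ^ 2 := by
      simp only [g, sub_sq, Finset.sum_add_distrib, Finset.sum_sub_distrib, Finset.mul_sum,
        Finset.sum_const, Finset.card_univ, nsmul_eq_mul]
      congr 2
      exact Finset.sum_congr rfl fun v _ => by ring
    rw [this, hf]
    have : 0 ≤ (Fintype.card V : ℝ) * m ^ 2 := by positivity
    linarith
  have hL1 := cheeger_mul_sum_abs_le hreg hd (fun v => g v * |g v|)
    (by
      refine le_trans (Nat.mul_le_mul_left 2 (Finset.card_le_card ?_)) hm₁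
      intro v hv
      have hv : 0 < g v * |g v| := by simpa using hv
      have := pos_of_mul_pos_left hv (abs_nonneg _)
      simpa [g] using this)
    (by
      refine le_trans (Nat.mul_le_mul_left 2 (Finset.card_le_card ?_)) hm₂
      intro v hv
      have hv : g v * |g v| < 0 := by simpa using hv
      have := neg_of_mul_neg_left hv (abs_nonneg _)
      simpa [g] using this)
  have habs : ∑ v, |(g v * |g v|)| = ∑ v, g v ^ 2 := by
    simp [abs_mul, ← sq]
  rw [habs] at hL1
  have hh := cheeger_nonneg G
  have hbound : cheeger G * ∑ u, ∑ v, adjWeight G u v * |(g u * |g u| - g v * |g v|)| ≤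
      ∑ u, ∑ v, (adjWeight G u v * (f u - f v) ^ 2 +
        cheeger G ^ 2 / 2 * (adjWeight G u v * g u ^ 2 + adjWeight G u v * g v ^ 2)) := by
    simp_rw [Finset.mul_sum]
    refine Finset.sum_le_sum fun u _ => Finset.sum_le_sum fun v _ => ?_
    have ha := adjWeight_nonneg G u v
    have hs := abs_mul_abs_sub_le (g u) (g v)
    have hd' : |g u - g v| = |f u - f v| := by simp [g]
    have key : cheeger G * |(g u * |g u| - g v * |g v|)| ≤
        (f u - f v) ^ 2 + cheeger G ^ 2 / 2 * (g u ^ 2 + g v ^ 2) := by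
      have h₁ := mul_le_mul_of_nonneg_left hs hh
      rw [hd'] at h₁
      rw [← sq_abs (f u - f v), ← sq_abs (g u), ← sq_abs (g v)]
      nlinarith [sq_nonneg (|f u - f v| - cheeger G / 2 * (|g u| + |g v|)),
        mul_nonneg (sq_nonneg (cheeger G)) (sq_nonneg (|g u| - |g v|))]
    nlinarith [mul_le_mul_of_nonneg_left key ha]
  simp_rw [Finset.sum_add_distrib, ← Finset.mul_sum, Finset.sum_add_distrib] at hbound
  rw [sum_adjWeight_mul_left hreg (fun u => g u ^ 2),
    sum_adjWeight_mul_right hreg (fun u => g u ^ 2)] at hbound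
  have h₁ := mul_le_mul_of_nonneg_left hL1 hh
  have h₂ := mul_le_mul_of_nonneg_left hgf
    (by positivity : 0 ≤ cheeger G ^ 2 * (d : ℝ))
  nlinarith

end Cheeger

section Eigenprojection

variable {V : Type*} [Fintype V]

/-- The orthogonal projection onto an eigenspace of a symmetric matrix. -/
lemma exists_eigenprojection {M : Matrix V V ℝ} (hM : M.IsHermitian) {μ : ℝ}
    (hμ : ∃ i, hM.eigenvalues i = μ) :
    ∃ (P : Matrix V V ℝ) (k : ℕ), P.transpose = P ∧ M * P = μ • P ∧
      (∀ X : Matrix V V ℝ, M * X = μ • X → P * X = X) ∧ P.trace = k ∧ 1 ≤ k ∧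
      (k = 1 → ∃ f : V → ℝ, ∀ u v, P u v = f u * f v) := by
  let U : Matrix V V ℝ := hM.eigenvectorUnitary
  have hU : U.transpose * U = 1 := by
    simpa [Matrix.star_eq_conjTranspose] using Unitary.coe_star_mul_self hM.eigenvectorUnitary
  have hU' : U * U.transpose = 1 := by
    simpa [Matrix.star_eq_conjTranspose] using Unitary.coe_mul_star_self hM.eigenvectorUnitary
  have hspec : M = U * Matrix.diagonal hM.eigenvalues * U.transpose := by
    conv_lhs => rw [hM.spectral_theorem, Unitary.conjStarAlgAut_apply]
    simp [U, Matrix.star_eq_conjTranspose]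
  let I : Finset V := {i | hM.eigenvalues i = μ}
  let E : Matrix V V ℝ := Matrix.diagonal fun i => if i ∈ I then 1 else 0
  have hDE : Matrix.diagonal hM.eigenvalues * E = μ • E := by
    ext i j
    by_cases hij : i = j
    · subst hij
      by_cases hi : hM.eigenvalues i = μ <;> simp [E, I, hi]
    · simp [E, hij]
  refine ⟨U * E * U.transpose, #I, ?_, ?_, ?_, ?_, ?_, ?_⟩
  · simp [E, Matrix.transpose_mul, Matrix.mul_assoc]
  · calc M * (U * E * U.transpose)
        = U * (Matrix.diagonal hM.eigenvalues * ((U.transpose * U) * E)) * U.transpose := by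
          conv_lhs => rw [hspec]
          simp only [Matrix.mul_assoc]
      _ = μ • (U * E * U.transpose) := by
          rw [hU, Matrix.one_mul, hDE]
          simp
  · intro X hX
    have hDX : Matrix.diagonal hM.eigenvalues * (U.transpose * X) = μ • (U.transpose * X) := by
      rw [← Matrix.mul_smul, ← hX]
      conv_rhs => rw [hspec]
      simp only [← Matrix.mul_assoc, hU, Matrix.one_mul]
    have hEX : E * (U.transpose * X) = U.transpose * X := by
      ext i j
      have h := congrFun (congrFun hDX i) j
      rw [Matrix.diagonal_mul, Matrix.smul_apply, smul_eq_mul] at h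
      rw [Matrix.diagonal_mul]
      by_cases hi : hM.eigenvalues i = μ
      · simp [I, hi]
      · have : (U.transpose * X) i j = 0 := by
          by_contra h0
          exact hi (mul_right_cancel₀ h0 h)
        simp [this]
    rw [Matrix.mul_assoc, Matrix.mul_assoc, hEX, ← Matrix.mul_assoc, hU', Matrix.one_mul]
  · rw [Matrix.trace_mul_comm, ← Matrix.mul_assoc, hU, Matrix.one_mul]
    simp [E, Matrix.trace_diagonal]
  · obtain ⟨i, hi⟩ := hμ
    exact Finset.card_pos.2 ⟨i, by simp [I, hi]⟩
  · intro hcard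
    obtain ⟨i, hi⟩ := Finset.card_eq_one.1 hcard
    refine ⟨fun u => U u i, fun u v => ?_⟩
    rw [Matrix.mul_apply]
    simp [E, hi, Matrix.mul_diagonal]

lemma eigenprojection_comp_equiv {M P : Matrix V V ℝ} {μ : ℝ} (hsymm : P.transpose = P)
    (heig : M * P = μ • P) (hproj : ∀ X : Matrix V V ℝ, M * X = μ • X → P * X = X)
    (σ : V ≃ V) (hσ : M.submatrix σ σ = M) : P.submatrix σ σ = P := by
  set Q := P.submatrix σ σ with hQ
  have hQsymm : Q.transpose = Q := by rw [hQ, Matrix.transpose_submatrix, hsymm]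
  have hMQ : M * Q = μ • Q := by
    conv_lhs => rw [← hσ]
    rw [hQ, Matrix.submatrix_mul_equiv, heig]
    rfl
  have hPQ := hproj Q hMQ
  have hσ' : M.submatrix σ.symm σ.symm = M := by
    conv_lhs => rw [← hσ]
    simp
  have hQP : Q * P = P := by
    have hR : M * P.submatrix σ.symm σ.symm = μ • P.submatrix σ.symm σ.symm := by
      conv_lhs => rw [← hσ']
      rw [Matrix.submatrix_mul_equiv, heig]
      rfl
    have h := congrArg (fun X => X.submatrix σ σ) (hproj _ hR)
    simp only [← Matrix.submatrix_mul_equiv _ _ σ σ σ] at h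
    simpa [hQ] using h
  have h := congrArg Matrix.transpose hPQ
  rw [Matrix.transpose_mul, hsymm, hQsymm, hQP] at h
  exact h.symm

end Eigenprojection

section VertexTransitive

variable {V : Type*} [Fintype V] {G : SimpleGraph V} {d : ℕ}

lemma normAdj_submatrix_iso (hreg : G.IsRegularOfDegree d) (φ : G ≃g G) :
    (normAdj G).submatrix φ.toEquiv φ.toEquiv = normAdj G := by
  ext u v
  have h : G.Adj (φ u) (φ v) ↔ G.Adj u v := φ.map_adj_iff
  simp [normAdj_apply hreg, adjWeight, h]

lemma sum_adjWeight_mul_eigen (hreg : G.IsRegularOfDegree d) (hd : 0 < d)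
    {P : Matrix V V ℝ} {μ : ℝ} (heig : normAdj G * P = μ • P) (u w : V) :
    ∑ v, adjWeight G u v * P v w = d * μ * P u w := by
  have h := congrFun (congrFun heig u) w
  rw [Matrix.mul_apply, Matrix.smul_apply, smul_eq_mul] at h
  simp_rw [normAdj_apply hreg, mul_assoc] at h
  rw [← Finset.mul_sum] at h
  have hd' : (d : ℝ) ≠ 0 := by positivity
  rw [mul_assoc, ← h, mul_inv_cancel_left₀ hd']

/-- For a simple eigenvalue of a non-bipartite graph whose eigenvector has constant modulus,
the distance to `-1` is at least `2/d`. -/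
lemma two_div_le_of_rank_one (hreg : G.IsRegularOfDegree d) (hd : 0 < d)
    (hnonbip : ¬ G.Colorable 2) {P : Matrix V V ℝ} {μ p : ℝ} (hp : 0 < p)
    (heig : normAdj G * P = μ • P) (hdiag : ∀ v, P v v = p)
    {f : V → ℝ} (hf : ∀ u v, P u v = f u * f v) : 2 / (d : ℝ) ≤ 1 + μ := by
  have hd' : (0 : ℝ) < d := by exact_mod_cast hd
  by_contra! hlt
  rw [lt_div_iff₀ hd'] at hlt
  have hsq : ∀ v, f v * f v = p := fun v => by rw [← hf, hdiag]
  have hpm : ∀ u v, f u * f v = p ∨ f u * f v = -p := fun u v => by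
    refine sq_eq_sq_iff_eq_or_eq_neg.1 ?_
    calc (f u * f v) ^ 2 = (f u * f u) * (f v * f v) := by ring
      _ = p ^ 2 := by rw [hsq, hsq, sq]
  have hadj : ∀ u v, G.Adj u v → f u * f v = -p := by
    intro u v huv
    refine (hpm u v).resolve_left fun hsame => ?_
    have hrow := sum_adjWeight_mul_eigen hreg hd heig u u
    have htot : ∑ w, adjWeight G u w * (p + P w u) = d * p * (1 + μ) := by
      simp_rw [mul_add, Finset.sum_add_distrib, ← Finset.sum_mul, sum_adjWeight_right hreg,
        hrow, hdiag]
      ring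
    have hle : adjWeight G u v * (p + P v u) ≤ ∑ w, adjWeight G u w * (p + P w u) := by
      refine Finset.single_le_sum (f := fun w => adjWeight G u w * (p + P w u))
        (fun w _ => mul_nonneg (adjWeight_nonneg G u w) ?_) (Finset.mem_univ v)
      rcases hpm w u with h | h <;> rw [hf, h] <;> linarith
    rw [htot, hf, mul_comm (f v), hsame] at hle
    simp only [adjWeight, huv, if_true] at hle
    nlinarith
  refine hnonbip ?_
  have hcol : G.Coloring Bool := SimpleGraph.Coloring.mk (fun v => decide (0 < f v)) (by
    intro u v huv heq
    have hneg : f u * f v < 0 := by rw [hadj u v huv]; linarith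
    rcases mul_neg_iff.1 hneg with ⟨h₁, h₂⟩ | ⟨h₁, h₂⟩
    · simp [h₁] at heq
      linarith
    · simp [h₂] at heq
      linarith)
  simpa using hcol.colorable

/-- For a multiple eigenvalue of a vertex-transitive graph, the Cheeger inequality applied to
the tensor square of the eigenspace embedding bounds the distance to `-1`. -/
lemma cheeger_sq_div_eight_le_of_two_le_rank [Nonempty V] (hreg : G.IsRegularOfDegree d)
    (hd : 0 < d) {P : Matrix V V ℝ} {μ p : ℝ} {k : ℕ} (hk : 2 ≤ k)
    (hsymm : P.transpose = P) (hidem : P * P = P) (heig : normAdj G * P = μ • P)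
    (hdiag : ∀ v, P v v = p) (htrace : P.trace = k) : cheeger G ^ 2 / 8 ≤ 1 + μ := by
  have hd' : (0 : ℝ) < d := by exact_mod_cast hd
  set n : ℝ := (Fintype.card V : ℝ) with hn
  have hnpos : 0 < n := by rw [hn]; exact_mod_cast Fintype.card_pos
  have hnp : n * p = k := by
    rw [← htrace, Matrix.trace]
    simp [hdiag, hn]
  have hsymm' : ∀ u v, P u v = P v u := fun u v => congrFun (congrFun hsymm v) u
  have hgram : ∀ u v, ∑ w, P w u * P w v = P u v := fun u v => by
    conv_rhs => rw [← hidem, Matrix.mul_apply]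
    exact Finset.sum_congr rfl fun w _ => by rw [hsymm' w u]
  let g : V → V → V → ℝ := fun w z v => P w v * P z v - P w z / n
  have hmean : ∀ w z, ∑ v, g w z v = 0 := fun w z => by
    have : ∑ v, P w v * P z v = P w z := by
      rw [← hgram]
      exact Finset.sum_congr rfl fun v _ => by rw [hsymm' w v, hsymm' z v]
    simp only [g, Finset.sum_sub_distrib, this, Finset.sum_const, Finset.card_univ, nsmul_eq_mul]
    rw [← hn]
    field_simp
    ring
  -- inner products of the tensor squares
  have htensor : ∀ u v, ∑ w, ∑ z, (P w u * P z u) * (P w v * P z v) = P u v ^ 2 := fun u v => by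
    rw [sq, ← hgram, Finset.sum_mul_sum]
    exact Finset.sum_congr rfl fun w _ => Finset.sum_congr rfl fun z _ => by ring
  have hcross : ∀ v, ∑ w, ∑ z, (P w v * P z v) * P w z = p := fun v => by
    have hinner : ∀ w, ∑ z, (P w v * P z v) * P w z = P w v * P w v := fun w => by
      have h := congrArg (P w v * ·) (hgram w v)
      simp only [Finset.mul_sum] at h
      rw [← h]
      exact Finset.sum_congr rfl fun z _ => by rw [hsymm' w z]; ring
    simp_rw [hinner, hgram, hdiag]
  have hfrob : ∑ w, ∑ z, P w z ^ 2 = k := by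
    rw [Finset.sum_comm, ← htrace, Matrix.trace]
    refine Finset.sum_congr rfl fun v _ => ?_
    rw [Matrix.diag_apply, ← hgram]
    exact Finset.sum_congr rfl fun w _ => sq _
  have hnorm : ∑ w, ∑ z, ∑ v, g w z v ^ 2 = n * p ^ 2 - p := by
    have hv : ∀ v, ∑ w, ∑ z, g w z v ^ 2 = p ^ 2 - 2 / n * p + k / n ^ 2 := fun v => by
      have hexp : ∀ w z, g w z v ^ 2 = (P w v * P z v) * (P w v * P z v)
          - 2 / n * ((P w v * P z v) * P w z) + (1 / n ^ 2) * P w z ^ 2 := fun w z => by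
        simp only [g]
        field_simp
        ring
      simp_rw [hexp, Finset.sum_add_distrib, Finset.sum_sub_distrib, ← Finset.mul_sum]
      rw [htensor, hcross, hfrob, hdiag]
      ring
    calc ∑ w, ∑ z, ∑ v, g w z v ^ 2 = ∑ v, ∑ w, ∑ z, g w z v ^ 2 := by
          simp_rw [Finset.sum_comm (s := univ) (t := univ) (f := fun z v => g _ z v ^ 2)]
          rw [Finset.sum_comm]
      _ = n * p ^ 2 - p := by
          simp_rw [hv]
          rw [Finset.sum_const, Finset.card_univ, nsmul_eq_mul, ← hn, ← hnp]
          field_simp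
          ring
  have hdist : ∀ u v, ∑ w, ∑ z, (g w z u - g w z v) ^ 2 = 2 * p ^ 2 - 2 * P u v ^ 2 :=
    fun u v => by
      have hexp : ∀ w z, (g w z u - g w z v) ^ 2 = (P w u * P z u) * (P w u * P z u)
          + (P w v * P z v) * (P w v * P z v)
          - 2 * ((P w u * P z u) * (P w v * P z v)) := fun w z => by
        simp only [g]
        ring
      simp_rw [hexp, Finset.sum_sub_distrib, Finset.sum_add_distrib, ← Finset.mul_sum]
      rw [htensor, htensor, htensor, hdiag, hdiag]
      ring
  have henergy : ∑ w, ∑ z, ∑ u, ∑ v, adjWeight G u v * (g w z u - g w z v) ^ 2 =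
      ∑ u, ∑ v, adjWeight G u v * (2 * p ^ 2 - 2 * P u v ^ 2) := by
    simp_rw [← hdist, Finset.mul_sum]
    calc _ = ∑ x : V × V, ∑ y : V × V,
          adjWeight G y.1 y.2 * (g x.1 x.2 y.1 - g x.1 x.2 y.2) ^ 2 := by
          simp_rw [Fintype.sum_prod_type]
      _ = ∑ y : V × V, ∑ x : V × V,
          adjWeight G y.1 y.2 * (g x.1 x.2 y.1 - g x.1 x.2 y.2) ^ 2 := Finset.sum_comm
      _ = _ := by simp_rw [Fintype.sum_prod_type]
  have hupper : ∑ u, ∑ v, adjWeight G u v * (2 * p ^ 2 - 2 * P u v ^ 2) ≤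
      4 * p * (n * d * p * (1 + μ)) := by
    have hlin : ∑ u, ∑ v, adjWeight G u v * (p + P v u) = n * d * p * (1 + μ) := by
      simp_rw [mul_add, Finset.sum_add_distrib, ← Finset.sum_mul, sum_adjWeight_right hreg,
        sum_adjWeight_mul_eigen hreg hd heig, hdiag]
      simp only [Finset.sum_const, Finset.card_univ, nsmul_eq_mul, ← hn]
      ring
    rw [← hlin, Finset.mul_sum]
    refine Finset.sum_le_sum fun u _ => ?_
    rw [Finset.mul_sum]
    refine Finset.sum_le_sum fun v _ => ?_
    rw [hsymm' v u]
    nlinarith [mul_nonneg (adjWeight_nonneg G u v) (sq_nonneg (p + P u v))]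
  have hpoincare : cheeger G ^ 2 * d * (n * p ^ 2 - p) ≤ 4 * p * (n * d * p * (1 + μ)) := by
    rw [← hnorm]
    refine le_trans ?_ (henergy.le.trans hupper)
    simp_rw [Finset.mul_sum]
    refine Finset.sum_le_sum fun w _ => Finset.sum_le_sum fun z _ => ?_
    rw [← Finset.mul_sum]
    exact cheeger_sq_mul_sum_sq_le hreg hd (g w z) (hmean w z)
  have hk' : (2 : ℝ) ≤ n * p := by rw [hnp]; exact_mod_cast hk
  have hp : 0 < p := pos_of_mul_pos_right (by linarith) hnpos.le
  have hdp : 0 < (d : ℝ) * p := mul_pos hd' hp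
  have hred : cheeger G ^ 2 * (n * p - 1) ≤ 4 * (n * p) * (1 + μ) := by
    refine le_of_mul_le_mul_left ?_ hdp
    linarith
  have hnp2 : cheeger G ^ 2 * (n * p / 2) ≤ cheeger G ^ 2 * (n * p - 1) :=
    mul_le_mul_of_nonneg_left (by linarith) (sq_nonneg _)
  refine le_of_mul_le_mul_left ?_ (by linarith : (0 : ℝ) < n * p)
  linarith

end VertexTransitive

/-- **Corollary 1, first estimate**: for a finite, connected, non-bipartite,
vertex-transitive graph of degree `d` with normalized adjacency eigenvalues
`μs (n-1) = μₙ ≤ ⋯ ≤ μs 0 = μ₁ = 1` (listed with multiplicity, in decreasing order, as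
the roots of the characteristic polynomial of `D⁻¹A`) and edge-expansion `h`, one has
`1 + μₙ ≥ min {2/d, ((√3-1)²/8)·h²}`. Non-bipartiteness is expressed as the
non-existence of a proper 2-coloring. -/
theorem one_add_smallest_ge_min_cheeger {V : Type*} [Fintype V] (G : SimpleGraph V)
    (hconn : G.Connected) (hn : 2 ≤ Fintype.card V)
    (hnonbip : ¬ G.Colorable 2)
    (hvt : VertexTransitive G)
    (d : ℕ) (hreg : G.IsRegularOfDegree d)
    (μs : Fin (Fintype.card V) → ℝ) (hanti : Antitone μs)
    (hchar : (normAdj G).charpoly = ∏ i, (X - C (μs i)))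
    (hμ1 : μs ⟨0, by omega⟩ = 1) :
    1 + μs ⟨Fintype.card V - 1, by omega⟩ ≥
      min (2 / (d : ℝ)) ((Real.sqrt 3 - 1) ^ 2 / 8 * cheeger G ^ 2) := by
  obtain ⟨v₀⟩ := hconn.nonempty
  have : Nonempty V := ⟨v₀⟩
  have hd : 0 < d := by
    refine Nat.pos_of_ne_zero fun h0 => hnonbip ?_
    subst h0
    refine ⟨SimpleGraph.Coloring.mk (fun _ => 0) fun {u v} huv => ?_⟩
    have := (G.degree_pos_iff_exists_adj u).2 ⟨v, huv⟩
    exact absurd (hreg u) this.ne'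
  set μ := μs ⟨Fintype.card V - 1, by omega⟩ with hμdef
  have hM := isHermitian_normAdj hreg
  have hμ : ∃ i, hM.eigenvalues i = μ := by
    have hroot : (normAdj G).charpoly.eval μ = 0 := by
      rw [hchar, Polynomial.eval_prod]
      exact Finset.prod_eq_zero (Finset.mem_univ ⟨Fintype.card V - 1, by omega⟩) (by simp [hμdef])
    rw [hM.charpoly_eq, Polynomial.eval_prod, Finset.prod_eq_zero_iff] at hroot
    obtain ⟨i, -, hi⟩ := hroot
    refine ⟨i, ?_⟩
    simp [sub_eq_zero] at hi
    exact hi.symm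
  obtain ⟨P, k, hsymm, heig, hproj, htrace, hk, hrank⟩ := exists_eigenprojection hM hμ
  have hdiag : ∀ v, P v v = P v₀ v₀ := fun v => by
    obtain ⟨φ, hφ⟩ := hvt v₀ v
    have h := eigenprojection_comp_equiv hsymm heig hproj φ.toEquiv
      (normAdj_submatrix_iso hreg φ)
    rw [← congrFun (congrFun h v₀) v₀, Matrix.submatrix_apply]
    exact hφ ▸ rfl
  rw [ge_iff_le]
  rcases hk.eq_or_lt with hk1 | hk2
  · obtain ⟨f, hf⟩ := hrank hk1.symm
    have hp : 0 < P v₀ v₀ := by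
      have hsum : (Fintype.card V : ℝ) * P v₀ v₀ = k := by
        rw [← htrace, Matrix.trace]
        simp [hdiag]
      refine pos_of_mul_pos_right (a := (Fintype.card V : ℝ)) ?_ (Nat.cast_nonneg _)
      rw [hsum, ← hk1]
      norm_num
    exact (min_le_left _ _).trans (two_div_le_of_rank_one hreg hd hnonbip hp heig hdiag hf)
  · refine (min_le_right _ _).trans (le_trans ?_ (cheeger_sq_div_eight_le_of_two_le_rank hreg hd
      hk2 hsymm (hproj P heig) heig hdiag htrace))
    have h3 : Real.sqrt 3 ^ 2 = 3 := Real.sq_sqrt (by norm_num)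
    have h3' := Real.sqrt_nonneg 3
    have hc : (Real.sqrt 3 - 1) ^ 2 ≤ 1 := by nlinarith
    nlinarith [mul_le_mul_of_nonneg_right hc (sq_nonneg (cheeger G))]

end
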